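/- arXiv:2505.19537 — 5 statements merged into one kernel-verified Lean document; each statement's English description precedes it below -/
import Mathlib

section
/- Let n, m be positive integers, P an n×n real matrix, R an m×m real matrix, Q an n×m real matrix, β ∈ (-1,1) and h > 0, and set c = 1/(1-β) and c' = h(1+β)/(2(1-β)^3). Define J = [[-P, -Q],[Qᵀ, R]], N_xx = c·P + c'·(P·P - Q·Qᵀ), N_xy = c·Q + c'·(P·Q - Q·R), N_yx = c·Qᵀ + c'·(Qᵀ·P - R·Qᵀ), N_yy = c·R + c'·(Qᵀ·Q - R·R), and further N'_yx = N_yx - (h/(1-β)²)·Qᵀ·P and N'_yy = N_yy - (h/(1-β)²)·Qᵀ·Q. Then [[-N_xx, -N_xy],[N'_yx, N'_yy]] = (c·I - c'·J)·J - (h/(1-β)²)·[[0, 0],[Qᵀ·P, Qᵀ·Q]]. -/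
open Matrix

/-- Jacobian identity for the continuous-time model of alternating
heavy ball momentum (Proposition 4.2 of the paper). -/
theorem stmt_1 (n m : ℕ) (hn : 0 < n) (hm : 0 < m)
    (P : Matrix (Fin n) (Fin n) ℝ) (R : Matrix (Fin m) (Fin m) ℝ)
    (Q : Matrix (Fin n) (Fin m) ℝ)
    (β h : ℝ) (hβ₁ : -1 < β) (hβ₂ : β < 1) (hh : 0 < h)
    (c c' : ℝ) (hc : c = 1 / (1 - β)) (hc' : c' = h * (1 + β) / (2 * (1 - β) ^ 3))
    (J : Matrix (Fin n ⊕ Fin m) (Fin n ⊕ Fin m) ℝ)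
    (hJ : J = Matrix.fromBlocks (-P) (-Q) Qᵀ R)
    (Nxx : Matrix (Fin n) (Fin n) ℝ) (hNxx : Nxx = c • P + c' • (P * P - Q * Qᵀ))
    (Nxy : Matrix (Fin n) (Fin m) ℝ) (hNxy : Nxy = c • Q + c' • (P * Q - Q * R))
    (Nyx : Matrix (Fin m) (Fin n) ℝ) (hNyx : Nyx = c • Qᵀ + c' • (Qᵀ * P - R * Qᵀ))
    (Nyy : Matrix (Fin m) (Fin m) ℝ) (hNyy : Nyy = c • R + c' • (Qᵀ * Q - R * R))
    (Nyx' : Matrix (Fin m) (Fin n) ℝ) (hNyx' : Nyx' = Nyx - (h / (1 - β) ^ 2) • (Qᵀ * P))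
    (Nyy' : Matrix (Fin m) (Fin m) ℝ) (hNyy' : Nyy' = Nyy - (h / (1 - β) ^ 2) • (Qᵀ * Q)) :
    Matrix.fromBlocks (-Nxx) (-Nxy) Nyx' Nyy' =
      (c • (1 : Matrix (Fin n ⊕ Fin m) (Fin n ⊕ Fin m) ℝ) - c' • J) * J -
        (h / (1 - β) ^ 2) • Matrix.fromBlocks 0 0 (Qᵀ * P) (Qᵀ * Q) := by
  clear hc hc'
  generalize h / (1 - β) ^ 2 = k at *
  subst hNyx' hNyy' hNxx hNxy hNyx hNyy hJ
  rw [sub_mul, smul_mul_assoc, smul_mul_assoc, one_mul, Matrix.fromBlocks_multiply,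
    Matrix.fromBlocks_smul, Matrix.fromBlocks_smul, Matrix.fromBlocks_smul]
  simp only [sub_eq_add_neg, Matrix.fromBlocks_neg, Matrix.fromBlocks_add]
  rw [Matrix.fromBlocks_inj]
  simp only [Matrix.neg_mul, Matrix.mul_neg, neg_neg, smul_zero, neg_zero, add_zero]
  refine ⟨?_, ?_, ?_, ?_⟩ <;> module
end

section
/- Let A be an invertible n×n real matrix and β ∈ (-1,0). For h > 0 set c₁ = h(1+β)/(2(1-β)³), c₂ = 1/(1-β), c₃ = h(1-3β)/(2(1-β)³), and let M_A(h) be the 2n×2n real block matrix [[c₁·A·Aᵀ, -c₂·A],[c₂·Aᵀ, -c₃·Aᵀ·A]]. Then there exists h₀ > 0 such that for all 0 < h < h₀, every complex eigenvalue of M_A(h) has strictly negative real part. -/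
open Matrix

lemma aux_quad (p q r : ℝ) (μ : ℂ) (hp : 0 < p) (hq : 0 < q) (hr : 0 < r)
    (h : (p : ℂ) * (μ * μ) + q * μ + r = 0) : μ.re < 0 := by
  have h1 := congrArg Complex.re h
  have h2 := congrArg Complex.im h
  simp at h1 h2
  by_contra hx
  push Not at hx
  have h3 : μ.im * (2 * p * μ.re + q) = 0 := by linarith
  rcases mul_eq_zero.mp h3 with h4 | h4
  · rw [h4] at h1
    nlinarith [mul_nonneg hq.le hx, mul_nonneg hp.le (mul_nonneg hx hx)]
  · nlinarith [mul_nonneg hp.le hx]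

lemma aux_dot {n : ℕ} (x : Fin n → ℂ) :
    star x ⬝ᵥ x = ((‖WithLp.toLp 2 x‖ ^ 2 : ℝ) : ℂ) := by
  rw [EuclideanSpace.norm_sq_eq]
  simp [dotProduct, Complex.conj_mul']

open scoped Matrix.Norms.L2Operator in
lemma aux_bound {n : ℕ} (B : Matrix (Fin n) (Fin n) ℂ) :
    ∃ K : ℝ, 0 ≤ K ∧ ∀ x : Fin n → ℂ,
      ‖WithLp.toLp 2 (B *ᵥ x)‖ ^ 2 ≤ K * ‖WithLp.toLp 2 x‖ ^ 2 := by
  refine ⟨‖B‖ ^ 2, by positivity, fun x => ?_⟩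
  have := Matrix.l2_opNorm_mulVec B (WithLp.toLp 2 x)
  rw [← mul_pow]
  exact pow_le_pow_left₀ (norm_nonneg _) this 2

lemma aux_main {n : ℕ} (B : Matrix (Fin n) (Fin n) ℂ) (hB : IsUnit B) (K : ℝ)
    (hK : ∀ x : Fin n → ℂ,
      ‖WithLp.toLp 2 (B *ᵥ x)‖ ^ 2 ≤ K * ‖WithLp.toLp 2 x‖ ^ 2)
    (c1 c2 c3 : ℝ) (h1 : 0 < c1) (h2 : 0 < c2) (h13 : c1 < c3)
    (hc : c1 * c3 * K < c2 ^ 2) (μ : ℂ) (u v : Fin n → ℂ) (huv : ¬ (u = 0 ∧ v = 0))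
    (e1 : (c1 : ℂ) • (B *ᵥ (Bᴴ *ᵥ u)) - (c2 : ℂ) • (B *ᵥ v) = μ • u)
    (e2 : (c2 : ℂ) • (Bᴴ *ᵥ u) - (c3 : ℂ) • (Bᴴ *ᵥ (B *ᵥ v)) = μ • v) :
    μ.re < 0 := by
  have inj : Function.Injective B.mulVec := Matrix.mulVec_injective_of_isUnit hB
  have inj' : Function.Injective Bᴴ.mulVec :=
    Matrix.mulVec_injective_of_isUnit ((Matrix.isUnit_conjTranspose B).2 hB)
  have c2ne : (c2 : ℂ) ≠ 0 := by exact_mod_cast h2.ne'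
  have hu : u ≠ 0 := by
    rintro rfl
    apply huv
    refine ⟨rfl, ?_⟩
    simp only [mulVec_zero, smul_zero, zero_sub, neg_eq_zero, smul_eq_zero, c2ne, false_or] at e1
    exact inj (by simpa using e1)
  set y := Bᴴ *ᵥ u with hy
  have hy0 : y ≠ 0 := fun h => hu (inj' (by simpa [hy] using h))
  have e1' : (c2 : ℂ) • (B *ᵥ v) = (c1 : ℂ) • (B *ᵥ y) - μ • u := by
    rw [← e1]; abel
  have key : (c2 : ℂ) • (B *ᵥ (Bᴴ *ᵥ (B *ᵥ v)))
      = B *ᵥ (Bᴴ *ᵥ ((c1 : ℂ) • (B *ᵥ y) - μ • u)) := by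
    rw [← e1', mulVec_smul, mulVec_smul]
  have e3 := congrArg (fun z => (c2 : ℂ) • (B *ᵥ z)) e2
  simp only [mulVec_sub, mulVec_smul, smul_sub] at e3
  rw [smul_comm (c2 : ℂ) (c3 : ℂ), smul_comm (c2 : ℂ) μ, key, e1'] at e3
  simp only [mulVec_sub, mulVec_smul, smul_sub, ← hy] at e3
  have e4 := congrArg (fun z => star u ⬝ᵥ z) e3
  simp only [dotProduct_sub, dotProduct_smul, smul_eq_mul] at e4
  have d : ∀ z, star u ⬝ᵥ (B *ᵥ z) = star y ⬝ᵥ z := by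
    intro z
    rw [hy, star_mulVec, conjTranspose_conjTranspose, dotProduct_mulVec]
  have d2 : star y ⬝ᵥ (Bᴴ *ᵥ (B *ᵥ y)) = star (B *ᵥ y) ⬝ᵥ (B *ᵥ y) := by
    rw [star_mulVec B y, dotProduct_mulVec]
  rw [d, d, d2, aux_dot, aux_dot, aux_dot] at e4
  have pu : 0 < ‖WithLp.toLp 2 u‖ ^ 2 := by
    have : WithLp.toLp 2 u ≠ 0 := by simpa using hu
    positivity
  have py : 0 < ‖WithLp.toLp 2 y‖ ^ 2 := by
    have : WithLp.toLp 2 y ≠ 0 := by simpa using hy0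
    positivity
  have hb := hK y
  generalize ‖WithLp.toLp 2 u‖ ^ 2 = p at *
  generalize ‖WithLp.toLp 2 y‖ ^ 2 = a at *
  generalize ‖WithLp.toLp 2 (B *ᵥ y)‖ ^ 2 = b at *
  have hr : 0 < c2 ^ 2 * a - c1 * c3 * b := by
    have : c1 * c3 * b ≤ c1 * c3 * (K * a) :=
      mul_le_mul_of_nonneg_left hb (mul_pos h1 (h1.trans h13)).le
    have := mul_lt_mul_of_pos_right hc py
    linarith
  refine aux_quad p ((c3 - c1) * a) (c2 ^ 2 * a - c1 * c3 * b) μ pu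
    (mul_pos (by linarith) py) hr ?_
  push_cast
  linear_combination e4

/-- for an invertible matrix A and negative momentum β, the Jacobian
of continuous-time alternating heavy ball in the bilinear game has all eigenvalues
with strictly negative real part for all sufficiently small step sizes
(Lemma B.2 / Proposition 3.2 of the paper). -/
theorem stmt_4 (n : ℕ) (A : Matrix (Fin n) (Fin n) ℝ) (hA : IsUnit A)
    (β : ℝ) (hβ₁ : -1 < β) (hβ₂ : β < 0) :
    ∃ h₀ : ℝ, 0 < h₀ ∧ ∀ h : ℝ, 0 < h → h < h₀ →
      ∀ μ : ℂ, μ ∈ spectrum ℂ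
        ((Matrix.fromBlocks
            ((h * (1 + β) / (2 * (1 - β) ^ 3)) • (A * Aᵀ))
            (-((1 / (1 - β)) • A))
            ((1 / (1 - β)) • Aᵀ)
            (-((h * (1 - 3 * β) / (2 * (1 - β) ^ 3)) • (Aᵀ * A)))).map Complex.ofReal) →
        μ.re < 0 := by
  have hB : IsUnit (A.map Complex.ofReal) := by
    have := hA.map (Complex.ofRealHom.mapMatrix (m := Fin n))
    exact this
  obtain ⟨K, hK0, hK⟩ := aux_bound (A.map Complex.ofReal)
  have hβ : 0 < 1 - β := by linarith
  set k1 := (1 + β) / (2 * (1 - β) ^ 3) with hk1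
  set k3 := (1 - 3 * β) / (2 * (1 - β) ^ 3) with hk3
  have pk1 : 0 < k1 := div_pos (by linarith) (by positivity)
  have pk13 : k1 < k3 := by
    rw [hk1, hk3]
    apply div_lt_div_of_pos_right (by linarith) (by positivity)
  have pk3 : 0 < k3 := pk1.trans pk13
  set c2 := 1 / (1 - β) with hc2
  have pc2 : 0 < c2 := by positivity
  have pD : 0 < k1 * k3 * K + 1 := by positivity
  refine ⟨min 1 (c2 ^ 2 / (k1 * k3 * K + 1)), by positivity, ?_⟩
  intro h hh hlt μ hμ
  have hl1 : h < 1 := hlt.trans_le (min_le_left _ _)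
  have hl2 : h * (k1 * k3 * K + 1) < c2 ^ 2 :=
    (lt_div_iff₀ pD).1 (hlt.trans_le (min_le_right _ _))
  rw [mul_div_assoc, mul_div_assoc, ← hk1, ← hk3] at hμ
  rw [spectrum.mem_iff, Matrix.isUnit_iff_isUnit_det, isUnit_iff_ne_zero, not_not,
    ← Matrix.exists_mulVec_eq_zero_iff] at hμ
  obtain ⟨w, hw0, hw⟩ := hμ
  rw [sub_mulVec, sub_eq_zero, Matrix.algebraMap_eq_diagonal] at hw
  have hT : (Aᵀ).map Complex.ofReal = (A.map Complex.ofReal)ᴴ := by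
    ext i j
    simp [conjTranspose_apply]
  have hmulT : (A * Aᵀ).map Complex.ofReal
      = A.map Complex.ofReal * (A.map Complex.ofReal)ᴴ := by
    rw [← hT]; exact Matrix.map_mul (f := Complex.ofRealHom)
  have hTmul : (Aᵀ * A).map Complex.ofReal
      = (A.map Complex.ofReal)ᴴ * A.map Complex.ofReal := by
    rw [← hT]; exact Matrix.map_mul (f := Complex.ofRealHom)
  have hs : ∀ (c : ℝ) (X : Matrix (Fin n) (Fin n) ℝ),
      (c • X).map Complex.ofReal = (c : ℂ) • X.map Complex.ofReal := by
    intro c X; ext i j; simp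
  have hn : ∀ (X : Matrix (Fin n) (Fin n) ℝ),
      (-X).map Complex.ofReal = - X.map Complex.ofReal := by
    intro X; ext i j; simp
  have hd : diagonal (algebraMap ℂ (Fin n ⊕ Fin n → ℂ) μ) *ᵥ w = μ • w := by
    ext i; simp [mulVec_diagonal]
  rw [hd, fromBlocks_map, hn, hn, hs, hs, hs, hs, hmulT, hTmul, hT, fromBlocks_mulVec] at hw
  refine aux_main (A.map Complex.ofReal) hB K hK (h * k1) c2 (h * k3) (by positivity) pc2
    (mul_lt_mul_of_pos_left pk13 hh) ?_ μ (w ∘ Sum.inl) (w ∘ Sum.inr) ?_ ?_ ?_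
  · have : h * h * (k1 * k3 * K) ≤ h * (k1 * k3 * K) :=
      mul_le_mul_of_nonneg_right (by nlinarith) (by positivity)
    nlinarith
  · rintro ⟨a, b⟩
    apply hw0
    ext i
    rcases i with i | i
    · exact congrFun a i
    · exact congrFun b i
  · ext i
    have := congrFun hw (Sum.inl i)
    simp only [Sum.elim_inl, neg_mulVec, smul_mulVec, ← mulVec_mulVec, ← sub_eq_add_neg] at this
    exact this.symm
  · ext i
    have := congrFun hw (Sum.inr i)
    simp only [Sum.elim_inr, neg_mulVec, smul_mulVec, ← mulVec_mulVec, ← sub_eq_add_neg] at this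
    exact this.symm
end

section
/- Let λ ∈ ℂ satisfy Re(λ) < 0 and (Im λ)² > (Re λ)², let β ∈ (-1,1), and let h be a real number with 0 < h < (2(1-β)²/(1+β)) · |Re λ| / ((Im λ)² - (Re λ)²). Set c = 1/(1-β) and c' = h(1+β)/(2(1-β)³). Then Re( (c - c'·λ)·λ ) < 0; equivalently, c·Re(λ) + c'·((Im λ)² - (Re λ)²) < 0. -/
/-- core complex inequality in the proof of Theorem 4.3 of the paper. -/
theorem stmt_5 (z : ℂ) (hre : z.re < 0) (him : z.re ^ 2 < z.im ^ 2)
    (β : ℝ) (hβ₁ : -1 < β) (hβ₂ : β < 1)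
    (h : ℝ) (hh₁ : 0 < h)
    (hh₂ : h < 2 * (1 - β) ^ 2 / (1 + β) * (|z.re| / (z.im ^ 2 - z.re ^ 2)))
    (c c' : ℝ) (hc : c = 1 / (1 - β)) (hc' : c' = h * (1 + β) / (2 * (1 - β) ^ 3)) :
    (((c : ℂ) - (c' : ℂ) * z) * z).re < 0 ∧
      c * z.re + c' * (z.im ^ 2 - z.re ^ 2) < 0 := by
  have key : c * z.re + c' * (z.im ^ 2 - z.re ^ 2) < 0 := by
    have h1 : 0 < 1 - β := by linarith
    have h2 : 0 < 1 + β := by linarith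
    have h3 : 0 < z.im ^ 2 - z.re ^ 2 := by linarith
    rw [abs_of_neg hre, div_mul_div_comm, lt_div_iff₀ (mul_pos h2 h3)] at hh₂
    have e : c * z.re + c' * (z.im ^ 2 - z.re ^ 2) =
        (h * ((1 + β) * (z.im ^ 2 - z.re ^ 2)) - 2 * (1 - β) ^ 2 * (-z.re)) /
          (2 * (1 - β) ^ 3) := by
      have h4 : 1 - β ≠ 0 := h1.ne'
      rw [hc, hc']
      field_simp
      ring
    rw [e]
    exact div_neg_of_neg_of_pos (by linarith) (by positivity)
  refine ⟨?_, key⟩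
  have e : (((c : ℂ) - (c' : ℂ) * z) * z).re = c * z.re + c' * (z.im ^ 2 - z.re ^ 2) := by
    simp
    ring
  rw [e]
  exact key
end

section
/- Let J be a d×d real matrix such that every eigenvalue λ ∈ ℂ of J satisfies Re(λ) < 0 and (Im λ)² > (Re λ)². Let β ∈ (-1,1) and let h > 0 satisfy h < (2(1-β)²/(1+β)) · |Re λ| / ((Im λ)² - (Re λ)²) for every eigenvalue λ of J. Set c = 1/(1-β) and c' = h(1+β)/(2(1-β)³). Then every complex eigenvalue μ of the matrix (c·I - c'·J)·J satisfies Re(μ) < 0. -/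
open Matrix

/-- spectral content of Theorem 4.3 of the paper: under the
eigenvalue assumptions on J and the step-size bound, all eigenvalues of
(c·I - c'·J)·J have strictly negative real part. -/
theorem stmt_6 (d : ℕ) (J : Matrix (Fin d) (Fin d) ℝ)
    (hJ : ∀ z : ℂ, z ∈ spectrum ℂ (J.map Complex.ofReal) →
      z.re < 0 ∧ z.re ^ 2 < z.im ^ 2)
    (β h : ℝ) (hβ₁ : -1 < β) (hβ₂ : β < 1) (hh : 0 < h)
    (hstep : ∀ z : ℂ, z ∈ spectrum ℂ (J.map Complex.ofReal) →
      h < 2 * (1 - β) ^ 2 / (1 + β) * (|z.re| / (z.im ^ 2 - z.re ^ 2)))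
    (c c' : ℝ) (hc : c = 1 / (1 - β)) (hc' : c' = h * (1 + β) / (2 * (1 - β) ^ 3)) :
    ∀ μ : ℂ, μ ∈ spectrum ℂ
        (((c • (1 : Matrix (Fin d) (Fin d) ℝ) - c' • J) * J).map Complex.ofReal) →
      μ.re < 0 := by
  intro μ hμ
  have hb : 0 < 1 - β := by linarith
  have hb' : 0 < 1 + β := by linarith
  have hc'pos : 0 < c' := by rw [hc']; positivity
  have hmat : ((c • (1 : Matrix (Fin d) (Fin d) ℝ) - c' • J) * J).map Complex.ofReal
      = Polynomial.aeval (J.map Complex.ofReal)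
        (Polynomial.C (-(c' : ℂ)) * Polynomial.X ^ 2 + Polynomial.C (c : ℂ) * Polynomial.X
          + Polynomial.C (0 : ℂ)) := by
    have hJJ : (J * J).map Complex.ofReal = J.map Complex.ofReal * J.map Complex.ofReal :=
      Matrix.map_mul (f := Complex.ofRealHom)
    simp only [map_add, map_mul, Polynomial.aeval_C, map_pow, Polynomial.aeval_X, map_zero,
      add_zero, ← Algebra.smul_def, pow_two, ← hJJ]
    rw [sub_mul, smul_mul_assoc, smul_mul_assoc, one_mul]
    ext i j
    simp
    ring
  rw [hmat, spectrum.map_polynomial_aeval_of_degree_pos] at hμ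
  · obtain ⟨z, hz, rfl⟩ := hμ
    obtain ⟨h1, h2⟩ := hJ z hz
    have h3 := hstep z hz
    have hD : 0 < z.im ^ 2 - z.re ^ 2 := by linarith
    rw [abs_of_neg h1, div_mul_div_comm, lt_div_iff₀ (by positivity)] at h3
    have key : c * z.re + c' * (z.im ^ 2 - z.re ^ 2) < 0 := by
      have e : c * z.re + c' * (z.im ^ 2 - z.re ^ 2) =
          (h * ((1 + β) * (z.im ^ 2 - z.re ^ 2)) - 2 * (1 - β) ^ 2 * (-z.re))
            / (2 * (1 - β) ^ 3) := by
        rw [hc, hc']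
        field_simp
        ring
      rw [e]
      exact div_neg_of_neg_of_pos (by linarith) (by positivity)
    simp [pow_two]
    nlinarith [key]
  · rw [Polynomial.degree_quadratic]
    · norm_num
    · simpa using hc'pos.ne'
end

section
/- Let r > 0 and D > 0 be real numbers and let h satisfy 0 < h < r/(2D). Define g : (-1,1) → ℝ by g(β) = -r/(1-β) + h·(1+β)·D/(2(1-β)³). Then there exists β* ∈ (0,1) such that g(β*) < g(β) for every β ∈ (-1,1) with β ≠ β*; that is, g attains a strict global minimum on (-1,1) at a strictly positive point. -/
/-- Theorem 4.5 of the paper: for step sizes h < r/(2D), the function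
g(β) = -r/(1-β) + h(1+β)D/(2(1-β)³) attains a strict global minimum on (-1,1) at
a strictly positive point. -/
theorem stmt_9 (r D h : ℝ) (hr : 0 < r) (hD : 0 < D) (hh₁ : 0 < h)
    (hh₂ : h < r / (2 * D))
    (g : ℝ → ℝ)
    (hg : g = fun β => -r / (1 - β) + h * (1 + β) * D / (2 * (1 - β) ^ 3)) :
    ∃ βs ∈ Set.Ioo (0 : ℝ) 1, ∀ β ∈ Set.Ioo (-1 : ℝ) 1, β ≠ βs → g βs < g β := by
  obtain ⟨k, hk⟩ : ∃ k, k = h * D := ⟨_, rfl⟩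
  have hk0 : 0 < k := hk ▸ mul_pos hh₁ hD
  have hkr : 2 * k < r := by
    rw [lt_div_iff₀ (by positivity)] at hh₂
    rw [hk]; linarith
  obtain ⟨v, hv1, hv⟩ : ∃ v : ℝ, 1 < v ∧ 3 * k * v ^ 2 - k * v - r = 0 := by
    have hs := Real.sq_sqrt (show 0 ≤ k ^ 2 + 12 * k * r by positivity)
    have h5 : 5 * k < √(k ^ 2 + 12 * k * r) := by
      apply Real.lt_sqrt_of_sq_lt
      nlinarith
    refine ⟨(k + √(k ^ 2 + 12 * k * r)) / (6 * k), ?_, ?_⟩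
    · rw [lt_div_iff₀ (by positivity)]; linarith
    · generalize √(k ^ 2 + 12 * k * r) = s at *
      field_simp
      linear_combination 3 * hs
  have key : ∀ u : ℝ, 0 < u → g (1 - u⁻¹) = -r * u + k * u ^ 3 - k / 2 * u ^ 2 := by
    intro u hu
    rw [hg, hk]
    simp only [sub_sub_cancel]
    field_simp
    ring
  have hv0 : 0 < v := by linarith
  refine ⟨1 - v⁻¹, ⟨?_, ?_⟩, ?_⟩
  · linarith [inv_lt_one_of_one_lt₀ hv1]
  · linarith [inv_pos.2 hv0]
  · rintro β ⟨hb1, hb2⟩ hne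
    obtain ⟨u, hu⟩ : ∃ u, u = (1 - β)⁻¹ := ⟨_, rfl⟩
    have hu0 : 0 < u := by rw [hu]; exact inv_pos.2 (by linarith)
    have hb : β = 1 - u⁻¹ := by rw [hu, inv_inv]; ring
    have huv : u - v ≠ 0 := by
      intro h0
      apply hne
      rw [hb, sub_eq_zero.1 h0]
    rw [hb, key u hu0, key v hv0]
    have hp : 0 < (u - v) ^ 2 * (k * (u + 2 * v - 1 / 2)) := by
      have : 0 < u + 2 * v - 1 / 2 := by linarith
      positivity
    linear_combination hp - (u - v) * hv
end
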